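/- arXiv:0905.3372 — 2 statements merged into one kernel-verified Lean document; each statement's English description precedes it below -/
import Mathlib

section
/- Let E be a compact metric space, k = n + m with n, m ≥ 1 integers, and write points of ℝ^k as x = (z, y) ∈ ℝ^n × ℝ^m. Let A ⊆ ℝ^k be Borel and f : A → E be a Borel map. Suppose A₁, A₂ ⊆ A are Borel sets such that: for every (z, y) ∈ A₁ the map z' ↦ f(z', y), defined on the slice {z' ∈ ℝ^n : (z', y) ∈ A}, satisfies δ_z(f(·, y)) < ∞ (with k replaced by n in the definition of δ); and for every (z, y) ∈ A₂ the map y' ↦ f(z, y'), defined on {y' ∈ ℝ^m : (z, y') ∈ A}, satisfies δ_y(f(z, ·)) < ∞ (with k replaced by m). Then δ_x f < ∞ for Leb^k-almost every x ∈ A₁ ∩ A₂. -/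
open MeasureTheory Filter Metric Set

/-- For a map `f` defined (in particular) on `A ⊆ X` and a point `x`, `delta k A f x` is the
smallest `M ∈ [0,∞]` such that `r^{-k}·Leb({y ∈ A ∩ B_r(x) : d(f y, f x) > M r}) → 0`
as `r → 0+`. -/
noncomputable def delta {X E : Type*} [PseudoMetricSpace X] [MeasureSpace X]
    [PseudoMetricSpace E] (k : ℕ) (A : Set X) (f : X → E) (x : X) : ENNReal :=
  sInf {M : ENNReal |
    Tendsto
      (fun r : ℝ =>
        volume {y | y ∈ A ∩ ball x r ∧ M * ENNReal.ofReal r < edist (f y) (f x)} /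
          ENNReal.ofReal (r ^ k))
      (nhdsWithin 0 (Ioi 0)) (nhds 0)}

/-- The point of `ℝ^{n+m} = ℝ^n × ℝ^m` (with the Euclidean metric) with coordinates
`(z, y)`. -/
noncomputable def combine {n m : ℕ} (z : EuclideanSpace ℝ (Fin n))
    (y : EuclideanSpace ℝ (Fin m)) : EuclideanSpace ℝ (Fin n ⊕ Fin m) :=
  (WithLp.equiv 2 _).symm (Sum.elim ((WithLp.equiv 2 _) z) ((WithLp.equiv 2 _) y))

/-- The projection `x = (z, y) ↦ z`. -/
noncomputable def projL {n m : ℕ} (x : EuclideanSpace ℝ (Fin n ⊕ Fin m)) :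
    EuclideanSpace ℝ (Fin n) :=
  (WithLp.equiv 2 _).symm fun i => (WithLp.equiv 2 _) x (Sum.inl i)

/-- The projection `x = (z, y) ↦ y`. -/
noncomputable def projR {n m : ℕ} (x : EuclideanSpace ℝ (Fin n ⊕ Fin m)) :
    EuclideanSpace ℝ (Fin m) :=
  (WithLp.equiv 2 _).symm fun j => (WithLp.equiv 2 _) x (Sum.inr j)

/-!
If `(x, y) ∈ B_r(p)` and `d(F (x, y), F p) > (M₁ + M₂) r`, then either the horizontal increment
from `p` to `(x, p.2)` exceeds `M₁ r`, which is rare by finiteness of the first partial `delta`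
at `p`, or the vertical increment from `(x, p.2)` to `(x, y)` exceeds `M₂ r`. By Fubini the second
event is rare as soon as the vertical bound holds uniformly at `(x, p.2)` for most `x` near `p.1`.
Such uniformity comes from the set `G` of points whose vertical exceedance ratio is at most `ε`
at all small scales: almost every `p ∈ G` is a density point of the horizontal slice of `G`
through `p`. Dyadic scales suffice, at the cost of a factor `2` in `M`, and they keep `G`
measurable.
-/

section Exceedance

variable {X E : Type*} [PseudoMetricSpace X] [PseudoMetricSpace E]

/-- The points of `A ∩ B_r(x)` whose image under `f` is at distance more than `t` from `f x`;
`delta` measures this set for `t = M * r`. -/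
def exceedSet (A : Set X) (f : X → E) (x : X) (r : ℝ) (t : ENNReal) : Set X :=
  {y | y ∈ A ∩ ball x r ∧ t < edist (f y) (f x)}

/-- The normalized volume `r⁻ᵏ · vol {y ∈ A ∩ B_r(x) : d(f y, f x) > M r}` whose limit as `r → 0+`
enters the definition of `delta`. -/
noncomputable def exceedRatio [MeasureSpace X] (k : ℕ) (M : ENNReal) (A : Set X) (f : X → E)
    (x : X) (r : ℝ) : ENNReal :=
  volume (exceedSet A f x r (M * ENNReal.ofReal r)) / ENNReal.ofReal (r ^ k)

lemma exceedSet_subset_exceedSet {A : Set X} {f : X → E} {x : X} {r s : ℝ} {t u : ENNReal}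
    (hrs : r ≤ s) (hut : u ≤ t) : exceedSet A f x r t ⊆ exceedSet A f x s u :=
  fun _ hy => ⟨⟨hy.1.1, ball_subset_ball hrs hy.1.2⟩, hut.trans_lt hy.2⟩

variable [MeasureSpace X] {k : ℕ} {A : Set X} {f : X → E} {x : X}

lemma exceedRatio_antitone (r : ℝ) : Antitone fun M => exceedRatio k M A f x r := fun M N hMN => by
  refine ENNReal.div_le_div_right (measure_mono ?_) _
  exact exceedSet_subset_exceedSet le_rfl (by gcongr)

lemma exceedRatio_two_mul_le {r s : ℝ} (hs : 0 < s) (hrs : r ≤ s) (hsr : s ≤ 2 * r)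
    (M : ENNReal) :
    exceedRatio k (2 * M) A f x r ≤ 2 ^ k * exceedRatio k M A f x s := by
  have h_two_mul : ENNReal.ofReal (2 * r) = 2 * ENNReal.ofReal r := by
    rw [ENNReal.ofReal_mul zero_le_two, ENNReal.ofReal_ofNat]
  have h_subset : exceedSet A f x r (2 * M * ENNReal.ofReal r) ⊆
      exceedSet A f x s (M * ENNReal.ofReal s) := by
    refine exceedSet_subset_exceedSet hrs ?_
    calc M * ENNReal.ofReal s ≤ M * ENNReal.ofReal (2 * r) := by gcongr
      _ = 2 * M * ENNReal.ofReal r := by rw [h_two_mul]; ring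
  have h_scale : ENNReal.ofReal (s ^ k) ≤ 2 ^ k * ENNReal.ofReal (r ^ k) := by
    calc ENNReal.ofReal (s ^ k) ≤ ENNReal.ofReal ((2 * r) ^ k) := by gcongr
      _ = 2 ^ k * ENNReal.ofReal (r ^ k) := by
        rw [mul_pow, ENNReal.ofReal_mul (by positivity), ENNReal.ofReal_pow zero_le_two,
          ENNReal.ofReal_ofNat]
  refine ENNReal.div_le_of_le_mul ?_
  calc volume (exceedSet A f x r (2 * M * ENNReal.ofReal r))
      ≤ volume (exceedSet A f x s (M * ENNReal.ofReal s)) := measure_mono h_subset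
    _ = exceedRatio k M A f x s * ENNReal.ofReal (s ^ k) :=
        (ENNReal.div_mul_cancel (by simpa using pow_pos hs k) ENNReal.ofReal_ne_top).symm
    _ ≤ exceedRatio k M A f x s * (2 ^ k * ENNReal.ofReal (r ^ k)) := by gcongr
    _ = 2 ^ k * exceedRatio k M A f x s * ENNReal.ofReal (r ^ k) := by ring

lemma delta_lt_top_iff : delta k A f x < ⊤ ↔
    ∃ M : ℕ, Tendsto (exceedRatio k M A f x) (nhdsWithin 0 (Ioi 0)) (nhds 0) := by
  refine sInf_lt_iff.trans ⟨?_, fun ⟨M, hM⟩ => ⟨M, hM, ENNReal.natCast_lt_top M⟩⟩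
  rintro ⟨M, hM, hM_top⟩
  obtain ⟨N, hN⟩ := ENNReal.exists_nat_gt hM_top.ne
  exact ⟨N, tendsto_of_tendsto_of_tendsto_of_le_of_le tendsto_const_nhds hM
    (fun _ => zero_le) fun r => exceedRatio_antitone r hN.le⟩

lemma tendsto_exceedRatio_two_mul_of_dyadic {M : ENNReal}
    (h : Tendsto (fun i : ℕ => exceedRatio k M A f x ((1 / 2) ^ i)) atTop (nhds 0)) :
    Tendsto (exceedRatio k (2 * M) A f x) (nhdsWithin 0 (Ioi 0)) (nhds 0) := by
  have h_mul : Tendsto (fun i : ℕ => 2 ^ k * exceedRatio k M A f x ((1 / 2) ^ i)) atTop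
      (nhds 0) := by
    simpa using ENNReal.Tendsto.const_mul h (Or.inr (by finiteness : (2 : ENNReal) ^ k ≠ ⊤))
  rw [ENNReal.tendsto_nhds_zero] at h_mul ⊢
  intro ε hε
  obtain ⟨j, hj⟩ := eventually_atTop.1 (h_mul ε hε)
  have hj_pos : (0 : ℝ) < (1 / 2) ^ j := by positivity
  filter_upwards [Ioo_mem_nhdsGT hj_pos] with r ⟨hr_pos, hr_lt⟩
  obtain ⟨i, hir, hri⟩ := exists_nat_pow_near_of_lt_one hr_pos
    (hr_lt.le.trans (pow_le_one₀ (by norm_num) (by norm_num)))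
    (by norm_num : (0 : ℝ) < 1 / 2) (by norm_num)
  have hji : j ≤ i := Nat.le_of_lt_succ <|
    (pow_lt_pow_iff_right_of_lt_one₀ (by norm_num) (by norm_num)).1 (hir.trans hr_lt)
  have h_two_mul : (1 / 2 : ℝ) ^ i ≤ 2 * r := by
    rw [pow_succ] at hir
    linarith
  exact (exceedRatio_two_mul_le (by positivity) hri h_two_mul M).trans (hj i hji)

lemma delta_lt_top_iff_dyadic : delta k A f x < ⊤ ↔
    ∃ M : ℕ, Tendsto (fun i : ℕ => exceedRatio k M A f x ((1 / 2) ^ i)) atTop (nhds 0) := by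
  refine delta_lt_top_iff.trans ⟨?_, ?_⟩
  · rintro ⟨M, hM⟩
    exact ⟨M, hM.comp (tendsto_pow_atTop_nhdsWithin_zero_of_lt_one (by norm_num) (by norm_num))⟩
  · rintro ⟨M, hM⟩
    exact ⟨2 * M, by exact_mod_cast tendsto_exceedRatio_two_mul_of_dyadic hM⟩

lemma delta_comp_le {X' : Type*} [PseudoMetricSpace X'] [MeasureSpace X'] {e : X' → X}
    (he : MeasurePreserving e) (he_lip : LipschitzWith 1 e) (x' : X') :
    delta k (e ⁻¹' A) (f ∘ e) x' ≤ delta k A f (e x') := by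
  refine sInf_le_sInf fun M hM => ?_
  refine tendsto_of_tendsto_of_tendsto_of_le_of_le tendsto_const_nhds hM
    (fun _ => zero_le) fun r => ENNReal.div_le_div_right ?_ _
  refine le_trans (measure_mono ?_) (he.measure_preimage_le _)
  rintro y ⟨⟨hyA, hyr⟩, hy⟩
  exact ⟨⟨hyA, by simpa using he_lip.mapsTo_ball one_ne_zero x' r hyr⟩, hy⟩

end Exceedance

section Density

/-- Upper Ahlfors `k`-regularity: the volume of balls of radius `r` is at most of order `r ^ k`. -/
def IsUpperRegular (X : Type*) [PseudoMetricSpace X] [MeasureSpace X] (k : ℕ) : Prop :=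
  ∃ C : ENNReal, C ≠ ⊤ ∧
    ∀ (x : X) (r : ℝ), 0 < r → volume (closedBall x r) ≤ C * ENNReal.ofReal (r ^ k)

lemma isUpperRegular_finrank (V : Type*) [NormedAddCommGroup V] [NormedSpace ℝ V]
    [FiniteDimensional ℝ V] [MeasureSpace V] [BorelSpace V]
    [(volume : Measure V).IsAddHaarMeasure] : IsUpperRegular V (Module.finrank ℝ V) :=
  ⟨volume (ball (0 : V) 1), measure_ball_lt_top.ne, fun x r hr => by
    rw [Measure.addHaar_closedBall _ x hr.le, mul_comm]⟩

lemma div_le_mul_div_of_le_mul {a v w C : ENNReal} (hav : a ≤ v) (hv : v ≠ ⊤) (hvw : v ≤ C * w) :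
    a / w ≤ C * (a / v) := by
  refine ENNReal.div_le_of_le_mul ?_
  calc a = v * (a / v) :=
        (ENNReal.mul_div_cancel' (fun h => nonpos_iff_eq_zero.1 (h ▸ hav)) (absurd · hv)).symm
    _ ≤ C * w * (a / v) := by gcongr
    _ = C * (a / v) * w := by ring

variable {X Y : Type*} [MetricSpace X] [SecondCountableTopology X] [HasBesicovitchCovering X]
  [MeasureSpace X] [BorelSpace X] [IsLocallyFiniteMeasure (volume : Measure X)] {n : ℕ}

lemma ae_tendsto_volume_ball_diff_div (hX : IsUpperRegular X n) {S : Set X}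
    (hS : MeasurableSet S) :
    ∀ᵐ x, x ∈ S → Tendsto (fun r => volume (ball x r \ S) / ENNReal.ofReal (r ^ n))
      (nhdsWithin 0 (Ioi 0)) (nhds 0) := by
  obtain ⟨C, hC_top, hC⟩ := hX
  filter_upwards [Besicovitch.ae_tendsto_measure_inter_div_of_measurableSet volume hS.compl]
    with x hx hxS
  rw [indicator_of_notMem (not_not_intro hxS)] at hx
  have h_mul := ENNReal.Tendsto.const_mul hx (Or.inr hC_top)
  rw [mul_zero] at h_mul
  refine tendsto_of_tendsto_of_tendsto_of_le_of_le' tendsto_const_nhds h_mul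
    (Eventually.of_forall fun _ => zero_le) ?_
  filter_upwards [self_mem_nhdsWithin] with r hr
  have h_subset : ball x r \ S ⊆ Sᶜ ∩ closedBall x r := fun y hy =>
    ⟨hy.2, ball_subset_closedBall hy.1⟩
  have h_finite : volume (closedBall x r) ≠ ⊤ :=
    ((hC x r hr).trans_lt (ENNReal.mul_lt_top hC_top.lt_top ENNReal.ofReal_lt_top)).ne
  calc volume (ball x r \ S) / ENNReal.ofReal (r ^ n)
      ≤ volume (Sᶜ ∩ closedBall x r) / ENNReal.ofReal (r ^ n) := by gcongr
    _ ≤ C * (volume (Sᶜ ∩ closedBall x r) / volume (closedBall x r)) :=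
        div_le_mul_div_of_le_mul (measure_mono inter_subset_right) h_finite (hC x r hr)

lemma ae_prod_tendsto_volume_ball_diff_div [MeasureSpace Y] [SFinite (volume : Measure Y)]
    (hX : IsUpperRegular X n) {r : ℕ → ℝ} (hr : Tendsto r atTop (nhdsWithin 0 (Ioi 0)))
    {G : Set (X × Y)} (hG : MeasurableSet G) :
    ∀ᵐ p : X × Y, p ∈ G →
      Tendsto (fun i => volume (ball p.1 (r i) \ (·, p.2) ⁻¹' G) / ENNReal.ofReal (r i ^ n))
        atTop (nhds 0) := by
  have h_volume (i : ℕ) :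
      Measurable fun p : X × Y => volume (ball p.1 (r i) \ (·, p.2) ⁻¹' G) := by
    have h_dist : MeasurableSet {q : (X × Y) × X | dist q.2 q.1.1 < r i} :=
      measurableSet_lt (by fun_prop) measurable_const
    have h_slice : MeasurableSet {q : (X × Y) × X | (q.2, q.1.2) ∈ G} :=
      hG.preimage (by fun_prop)
    exact measurable_measure_prodMk_left (h_dist.diff h_slice)
  have h_tendsto := measurableSet_tendsto (l := atTop) (nhds 0) fun i =>
    (h_volume i).div_const (ENNReal.ofReal (r i ^ n))
  have h_imp := hG.himp h_tendsto
  refine (Measure.ae_prod_iff_ae_ae h_imp).2 <| (Measure.ae_ae_comm h_imp).2 ?_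
  refine Eventually.of_forall fun y => ?_
  have h_slice : MeasurableSet ((·, y) ⁻¹' G) := hG.preimage measurable_prodMk_right
  filter_upwards [ae_tendsto_volume_ball_diff_div hX h_slice] with x hx hxG
  exact (hx hxG).comp hr

end Density

section VerticalSlices

variable {X Y E : Type*} [MeasurableSpace X] [PseudoMetricSpace Y] [SecondCountableTopology Y]
  [PseudoMetricSpace E] [SecondCountableTopology E] [MeasurableSpace E] [OpensMeasurableSpace E]
  {A : Set (X × Y)} {F : X × Y → E}

lemma measurableSet_mem_exceedSet_slice [MeasurableSpace Y] [OpensMeasurableSpace Y]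
    (hA : MeasurableSet A) (hF : Measurable F) (r : ℝ) (t : ENNReal) :
    MeasurableSet {q : (X × Y) × Y |
      q.2 ∈ exceedSet (Prod.mk q.1.1 ⁻¹' A) (fun y => F (q.1.1, y)) q.1.2 r t} := by
  have h_mem : MeasurableSet {q : (X × Y) × Y | (q.1.1, q.2) ∈ A} := hA.preimage (by fun_prop)
  have h_dist : MeasurableSet {q : (X × Y) × Y | dist q.2 q.1.2 < r} :=
    measurableSet_lt (by fun_prop) measurable_const
  have h_edist : MeasurableSet {q : (X × Y) × Y | t < edist (F (q.1.1, q.2)) (F q.1)} :=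
    measurableSet_lt measurable_const ((hF.comp (by fun_prop)).edist (hF.comp measurable_fst))
  exact (h_mem.inter h_dist).inter h_edist

/-- The points of `A` at which the vertical slice of `F` has exceedance ratio at most `ε` at all
scales `r i` with `j ≤ i`. Restricting to a sequence of scales makes this set measurable. -/
def verticalGoodSet {X Y E : Type*} [PseudoMetricSpace Y] [MeasureSpace Y] [PseudoMetricSpace E]
    (m : ℕ) (M : ENNReal) (A : Set (X × Y)) (F : X × Y → E) (r : ℕ → ℝ) (ε : ENNReal) (j : ℕ) :
    Set (X × Y) :=
  {p | p ∈ A ∧ ∀ i ≥ j,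
    exceedRatio m M (Prod.mk p.1 ⁻¹' A) (fun y => F (p.1, y)) p.2 (r i) ≤ ε}

lemma measurableSet_verticalGoodSet [MeasureSpace Y] [OpensMeasurableSpace Y]
    [SFinite (volume : Measure Y)] {m : ℕ} (hA : MeasurableSet A) (hF : Measurable F) (M : ENNReal)
    (r : ℕ → ℝ) (ε : ENNReal) (j : ℕ) :
    MeasurableSet (verticalGoodSet m M A F r ε j) := by
  have h_ratio (i : ℕ) : Measurable fun p : X × Y =>
      exceedRatio m M (Prod.mk p.1 ⁻¹' A) (fun y => F (p.1, y)) p.2 (r i) :=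
    (measurable_measure_prodMk_left (measurableSet_mem_exceedSet_slice hA hF _ _)).div_const _
  have h_bound : MeasurableSet {p : X × Y | ∀ i ≥ j,
      exceedRatio m M (Prod.mk p.1 ⁻¹' A) (fun y => F (p.1, y)) p.2 (r i) ≤ ε} := by
    simp only [ofPred_forall]
    exact .iInter fun i => .iInter fun _ => measurableSet_le (h_ratio i) measurable_const
  exact hA.inter h_bound

end VerticalSlices

section Product

variable {X Y E : Type*} [PseudoMetricSpace E]

lemma volume_le_mul_of_slice_le [MeasureSpace X] [MeasureSpace Y] [SFinite (volume : Measure Y)]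
    {T : Set (X × Y)} (hT : MeasurableSet T) {S : Set X} (hTS : T ⊆ Prod.fst ⁻¹' S) {c : ENNReal}
    (hc : ∀ x ∈ S, volume (Prod.mk x ⁻¹' T) ≤ c) : volume T ≤ volume S * c := by
  rw [Measure.volume_eq_prod, Measure.prod_apply hT, mul_comm]
  refine le_trans (lintegral_mono fun x => ?_) (lintegral_indicator_const_le S c)
  by_cases hx : x ∈ S
  · rw [indicator_of_mem hx]
    exact hc x hx
  · rw [show Prod.mk x ⁻¹' T = ∅ from eq_empty_of_forall_notMem fun y hy => hx (hTS hy),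
      measure_empty]
    exact zero_le

variable [PseudoMetricSpace X] [PseudoMetricSpace Y] {A : Set (X × Y)} {F : X × Y → E}

lemma exceedSet_prod_subset {H : Set X} {p : X × Y} (hHA : H ⊆ (·, p.2) ⁻¹' A) (r : ℝ)
    (t₁ t₂ : ENNReal) :
    exceedSet A F p r (t₁ + t₂) ⊆
      (exceedSet ((·, p.2) ⁻¹' A) (fun x => F (x, p.2)) p.1 r t₁ ∪ ball p.1 r \ H) ×ˢ
          ball p.2 r ∪
        {q | q.1 ∈ H ∩ ball p.1 r ∧
          q.2 ∈ exceedSet (Prod.mk q.1 ⁻¹' A) (fun y => F (q.1, y)) p.2 r t₂} := by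
  rintro ⟨x, y⟩ ⟨⟨hA, hxy⟩, h_far⟩
  obtain ⟨hx, hy⟩ : x ∈ ball p.1 r ∧ y ∈ ball p.2 r := by rwa [← ball_prod_same] at hxy
  by_cases hxH : x ∈ H
  · by_cases h_horizontal : t₁ < edist (F (x, p.2)) (F p)
    · exact Or.inl ⟨Or.inl ⟨⟨hHA hxH, hx⟩, h_horizontal⟩, hy⟩
    · refine Or.inr ⟨⟨hxH, hx⟩, ⟨hA, hy⟩, lt_of_not_ge fun h_vertical => h_far.not_ge ?_⟩
      calc edist (F (x, y)) (F p)
          ≤ edist (F (x, y)) (F (x, p.2)) + edist (F (x, p.2)) (F p) := edist_triangle _ _ _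
        _ ≤ t₂ + t₁ := add_le_add h_vertical (not_lt.1 h_horizontal)
        _ = t₁ + t₂ := add_comm _ _
  · exact Or.inl ⟨Or.inr ⟨hx, hxH⟩, hy⟩

variable [SecondCountableTopology E] [MeasurableSpace E] [OpensMeasurableSpace E]
  [MeasureSpace X] [OpensMeasurableSpace X]
  [SecondCountableTopology Y] [MeasureSpace Y] [OpensMeasurableSpace Y]
  [SFinite (volume : Measure Y)] {n m : ℕ}

lemma volume_exceedSet_prod_le (hA : MeasurableSet A) (hF : Measurable F) {H : Set X}
    (hH : MeasurableSet H) {p : X × Y} (hHA : H ⊆ (·, p.2) ⁻¹' A) {r : ℝ} {t₁ t₂ c : ENNReal}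
    (hc : ∀ x ∈ H, volume (exceedSet (Prod.mk x ⁻¹' A) (fun y => F (x, y)) p.2 r t₂) ≤ c) :
    volume (exceedSet A F p r (t₁ + t₂)) ≤
      (volume (exceedSet ((·, p.2) ⁻¹' A) (fun x => F (x, p.2)) p.1 r t₁) +
        volume (ball p.1 r \ H)) * volume (ball p.2 r) + volume (ball p.1 r) * c := by
  refine (measure_mono (exceedSet_prod_subset hHA r t₁ t₂)).trans <|
    (measure_union_le _ _).trans (add_le_add ?_ ?_)
  · rw [Measure.volume_eq_prod, Measure.prod_prod]
    gcongr
    exact measure_union_le _ _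
  · have h_meas : MeasurableSet {q : X × Y | q.1 ∈ H ∩ ball p.1 r ∧
        q.2 ∈ exceedSet (Prod.mk q.1 ⁻¹' A) (fun y => F (q.1, y)) p.2 r t₂} :=
      ((hH.inter measurableSet_ball).preimage measurable_fst).inter <|
        (measurableSet_mem_exceedSet_slice hA hF r t₂).preimage
          (f := fun q : X × Y => ((q.1, p.2), q.2)) (by fun_prop)
    calc _ ≤ volume (H ∩ ball p.1 r) * c :=
          volume_le_mul_of_slice_le h_meas (fun _ hq => hq.1) fun x hx =>
            (measure_mono fun _ hy => hy.2).trans (hc x hx.1)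
      _ ≤ volume (ball p.1 r) * c := by
          gcongr
          exact inter_subset_right

lemma exceedRatio_prod_le (hA : MeasurableSet A) (hF : Measurable F) {H : Set X}
    (hH : MeasurableSet H) {p : X × Y} (hHA : H ⊆ (·, p.2) ⁻¹' A) {r : ℝ} (hr : 0 < r)
    {M₁ M₂ ε C₁ C₂ : ENNReal}
    (hC₁ : volume (ball p.1 r) ≤ C₁ * ENNReal.ofReal (r ^ n))
    (hC₂ : volume (ball p.2 r) ≤ C₂ * ENNReal.ofReal (r ^ m))
    (hε : ∀ x ∈ H, exceedRatio m M₂ (Prod.mk x ⁻¹' A) (fun y => F (x, y)) p.2 r ≤ ε) :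
    exceedRatio (n + m) (M₁ + M₂) A F p r ≤
      (exceedRatio n M₁ ((·, p.2) ⁻¹' A) (fun x => F (x, p.2)) p.1 r +
        volume (ball p.1 r \ H) / ENNReal.ofReal (r ^ n)) * C₂ + C₁ * ε := by
  have h_ne_zero (k : ℕ) : ENNReal.ofReal (r ^ k) ≠ 0 := by simpa using pow_pos hr k
  have h_vertical (x : X) (hx : x ∈ H) :=
    (ENNReal.div_le_iff (h_ne_zero m) ENNReal.ofReal_ne_top).1 (hε x hx)
  refine ENNReal.div_le_of_le_mul ?_
  rw [add_mul]
  refine (volume_exceedSet_prod_le hA hF hH hHA h_vertical).trans ?_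
  unfold exceedRatio
  rw [pow_add, ENNReal.ofReal_mul (by positivity), ENNReal.div_add_div_same]
  set a := volume (exceedSet ((·, p.2) ⁻¹' A) (fun x => F (x, p.2)) p.1 r
    (M₁ * ENNReal.ofReal r)) + volume (ball p.1 r \ H)
  set u := ENNReal.ofReal (r ^ n)
  set v := ENNReal.ofReal (r ^ m)
  calc a * volume (ball p.2 r) + volume (ball p.1 r) * (ε * v)
      ≤ a * (C₂ * v) + C₁ * u * (ε * v) := by gcongr
    _ = a / u * u * (C₂ * v) + C₁ * u * (ε * v) := by
        rw [ENNReal.div_mul_cancel (h_ne_zero n) ENNReal.ofReal_ne_top]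
    _ = (a / u * C₂ + C₁ * ε) * (u * v) := by ring

lemma tendsto_exceedRatio_prod (hX : IsUpperRegular X n) (hY : IsUpperRegular Y m)
    (hA : MeasurableSet A) (hF : Measurable F) {r : ℕ → ℝ} (hr : ∀ᶠ i in atTop, 0 < r i)
    {M₁ M₂ : ENNReal} {p : X × Y} (hp : p ∈ A)
    (h_density : ∀ l j : ℕ, p ∈ verticalGoodSet m M₂ A F r (l : ENNReal)⁻¹ j →
      Tendsto (fun i => volume (ball p.1 (r i) \
        (·, p.2) ⁻¹' verticalGoodSet m M₂ A F r (l : ENNReal)⁻¹ j) / ENNReal.ofReal (r i ^ n))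
        atTop (nhds 0))
    (h₁ : Tendsto (fun i => exceedRatio n M₁ ((·, p.2) ⁻¹' A) (fun x => F (x, p.2)) p.1 (r i))
      atTop (nhds 0))
    (h₂ : Tendsto (fun i => exceedRatio m M₂ (Prod.mk p.1 ⁻¹' A) (fun y => F (p.1, y)) p.2 (r i))
      atTop (nhds 0)) :
    Tendsto (fun i => exceedRatio (n + m) (M₁ + M₂) A F p (r i)) atTop (nhds 0) := by
  obtain ⟨C₁, hC₁_top, hC₁⟩ := hX
  obtain ⟨C₂, hC₂_top, hC₂⟩ := hY
  rw [ENNReal.tendsto_nhds_zero]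
  intro ε hε
  obtain ⟨l, hl⟩ : ∃ l : ℕ, C₁ * (l : ENNReal)⁻¹ < ε := by
    have h_lim := ENNReal.Tendsto.const_mul ENNReal.tendsto_inv_nat_nhds_zero (Or.inr hC₁_top)
    rw [mul_zero] at h_lim
    exact (h_lim.eventually_lt_const hε).exists
  obtain ⟨j, hj⟩ : ∃ j, p ∈ verticalGoodSet m M₂ A F r (l : ENNReal)⁻¹ j :=
    (eventually_atTop.1 (h₂.eventually_le_const (by simp))).imp fun _ h => ⟨hp, h⟩
  have h_bound := (ENNReal.Tendsto.mul_const (h₁.add (h_density l j hj)) (Or.inr hC₂_top)).add_const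
    (C₁ * (l : ENNReal)⁻¹)
  rw [add_zero, zero_mul, zero_add] at h_bound
  filter_upwards [h_bound.eventually_le_const hl, hr, eventually_ge_atTop j] with i hi hri hij
  refine le_trans ?_ hi
  exact exceedRatio_prod_le hA hF
    ((measurableSet_verticalGoodSet hA hF M₂ r _ j).preimage measurable_prodMk_right)
    (fun _ hx => hx.1) hri ((measure_mono ball_subset_closedBall).trans (hC₁ p.1 _ hri))
    ((measure_mono ball_subset_closedBall).trans (hC₂ p.2 _ hri)) fun _ hx => hx.2 i hij

end Product

theorem ae_delta_prod_lt_top {X Y E : Type*} [MetricSpace X] [SecondCountableTopology X]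
    [HasBesicovitchCovering X] [MeasureSpace X] [BorelSpace X]
    [IsLocallyFiniteMeasure (volume : Measure X)]
    [PseudoMetricSpace Y] [SecondCountableTopology Y] [MeasureSpace Y] [OpensMeasurableSpace Y]
    [SFinite (volume : Measure Y)]
    [PseudoMetricSpace E] [SecondCountableTopology E] [MeasurableSpace E] [OpensMeasurableSpace E]
    {n m : ℕ} (hX : IsUpperRegular X n) (hY : IsUpperRegular Y m)
    {A : Set (X × Y)} (hA : MeasurableSet A) {F : X × Y → E} (hF : Measurable F) :
    ∀ᵐ p : X × Y, p ∈ A →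
      delta n ((·, p.2) ⁻¹' A) (fun x => F (x, p.2)) p.1 < ⊤ →
      delta m (Prod.mk p.1 ⁻¹' A) (fun y => F (p.1, y)) p.2 < ⊤ →
      delta (n + m) A F p < ⊤ := by
  let r : ℕ → ℝ := fun i => (1 / 2) ^ i
  have hr_tendsto : Tendsto r atTop (nhdsWithin 0 (Ioi 0)) :=
    tendsto_pow_atTop_nhdsWithin_zero_of_lt_one (by norm_num) (by norm_num)
  have hr_pos : ∀ᶠ i in atTop, 0 < r i := hr_tendsto.eventually self_mem_nhdsWithin
  have h_density := ae_all_iff.2 fun M : ℕ => ae_all_iff.2 fun l : ℕ => ae_all_iff.2 fun j : ℕ =>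
    ae_prod_tendsto_volume_ball_diff_div hX hr_tendsto
      (measurableSet_verticalGoodSet (m := m) hA hF M r (l : ENNReal)⁻¹ j)
  filter_upwards [h_density] with p hp hpA h₁ h₂
  obtain ⟨M₁, hM₁⟩ := delta_lt_top_iff_dyadic.1 h₁
  obtain ⟨M₂, hM₂⟩ := delta_lt_top_iff_dyadic.1 h₂
  refine delta_lt_top_iff_dyadic.2 ⟨M₁ + M₂, ?_⟩
  rw [Nat.cast_add]
  exact tendsto_exceedRatio_prod hX hY hA hF hr_pos hpA (hp M₂) hM₁ hM₂

section Euclidean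

variable {ι κ : Type*} [Fintype ι] [Fintype κ]

lemma measurePreserving_euclideanSpace_sumEquivProd :
    MeasurePreserving (EuclideanSpace.sumEquivProd (𝕜 := ℝ) (ι := ι) (κ := κ)) :=
  (WithLp.volume_preserving_ofLp (EuclideanSpace ℝ ι) (EuclideanSpace ℝ κ)).comp
    (PiLp.sumPiLpEquivProdLpPiLp 2 fun _ : ι ⊕ κ => ℝ).measurePreserving

lemma lipschitzWith_euclideanSpace_sumEquivProd :
    LipschitzWith 1 (EuclideanSpace.sumEquivProd (𝕜 := ℝ) (ι := ι) (κ := κ)) :=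
  ((WithLp.prod_lipschitzWith_ofLp 2 (EuclideanSpace ℝ ι) (EuclideanSpace ℝ κ)).comp
    (PiLp.sumPiLpEquivProdLpPiLp 2 fun _ : ι ⊕ κ => ℝ).isometry.lipschitz).weaken (mul_one 1).le

end Euclidean

theorem delta_finite_of_partial_delta_finite_general {n m : ℕ} {E : Type*} [PseudoMetricSpace E]
    [SecondCountableTopology E] [MeasurableSpace E] [OpensMeasurableSpace E]
    {A : Set (EuclideanSpace ℝ (Fin n ⊕ Fin m))} (hA : MeasurableSet A)
    {f : EuclideanSpace ℝ (Fin n ⊕ Fin m) → E} (hf : Measurable f) :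
    ∀ᵐ x, x ∈ A →
      delta n {z' | combine z' (projR x) ∈ A} (fun z' => f (combine z' (projR x))) (projL x) < ⊤ →
      delta m {y' | combine (projL x) y' ∈ A} (fun y' => f (combine (projL x) y')) (projR x) < ⊤ →
      delta (n + m) A f x < ⊤ := by
  let e : EuclideanSpace ℝ (Fin n ⊕ Fin m) ≃L[ℝ] _ := EuclideanSpace.sumEquivProd
  have he : MeasurePreserving e := measurePreserving_euclideanSpace_sumEquivProd
  have hA' : MeasurableSet (e.symm ⁻¹' A) := hA.preimage e.symm.continuous.measurable
  have hf' : Measurable (f ∘ e.symm) := hf.comp e.symm.continuous.measurable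
  have hn : IsUpperRegular (EuclideanSpace ℝ (Fin n)) n := by
    simpa using isUpperRegular_finrank (EuclideanSpace ℝ (Fin n))
  have hm : IsUpperRegular (EuclideanSpace ℝ (Fin m)) m := by
    simpa using isUpperRegular_finrank (EuclideanSpace ℝ (Fin m))
  filter_upwards [he.quasiMeasurePreserving.ae (ae_delta_prod_lt_top hn hm hA' hf')]
    with x hx hxA h₁ h₂
  have h_prod : delta (n + m) (e.symm ⁻¹' A) (f ∘ e.symm) (e x) < ⊤ :=
    hx (by simpa using hxA) h₁ h₂
  have h_le := delta_comp_le (k := n + m) (A := e.symm ⁻¹' A) (f := f ∘ e.symm) he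
    lipschitzWith_euclideanSpace_sumEquivProd x
  simpa [preimage_preimage, Function.comp_assoc] using h_le.trans_lt h_prod

/-- Lusin-type Lipschitz approximation, part (i): if the map `f : A → E`,
`A ⊆ ℝ^k = ℝ^n × ℝ^m`, is Borel and has finite partial difference quotients `δ_z(f(·,y))`
on `A₁` and `δ_y(f(z,·))` on `A₂`, then `δ_x f < ∞` for `Leb^k`-a.e. `x ∈ A₁ ∩ A₂`. -/
theorem delta_finite_of_partial_delta_finite {E : Type*} [MetricSpace E] [CompactSpace E]
    [MeasurableSpace E] [BorelSpace E]
    (n m : ℕ) (hn : 1 ≤ n) (hm : 1 ≤ m)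
    (A A₁ A₂ : Set (EuclideanSpace ℝ (Fin n ⊕ Fin m)))
    (hA : MeasurableSet A) (hA₁ : MeasurableSet A₁) (hA₂ : MeasurableSet A₂)
    (hA₁A : A₁ ⊆ A) (hA₂A : A₂ ⊆ A)
    (f : EuclideanSpace ℝ (Fin n ⊕ Fin m) → E) (hf : Measurable f)
    (hslice₁ : ∀ x ∈ A₁,
      delta n {z' : EuclideanSpace ℝ (Fin n) | combine z' (projR x) ∈ A}
        (fun z' => f (combine z' (projR x))) (projL x) < ⊤)
    (hslice₂ : ∀ x ∈ A₂,
      delta m {y' : EuclideanSpace ℝ (Fin m) | combine (projL x) y' ∈ A}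
        (fun y' => f (combine (projL x) y')) (projR x) < ⊤) :
    ∀ᵐ x ∂volume, x ∈ A₁ ∩ A₂ → delta (n + m) A f x < ⊤ := by
  filter_upwards [delta_finite_of_partial_delta_finite_general hA hf] with x hx ⟨hx₁, hx₂⟩
  exact hx (hA₁A hx₁) (hslice₁ x hx₁) (hslice₂ x hx₂)
end

section
/- Let E be a compact metric space, A ⊆ ℝ^k Borel, and f : A → E a Borel map such that δ_x f < ∞ for Leb^k-almost every x ∈ A. Then there exists a sequence of Borel sets B_n ⊆ A such that Leb^k(A \ ⋃_n B_n) = 0 and the restriction of f to each B_n is a Lipschitz map. -/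
open MeasureTheory Filter Metric Set

/-!
Suppose `x` and `z` are close points at which `f` is approximately Lipschitz with constant `M`, and
let `r` be slightly larger than `dist x z`. At scale `2r`, all but a small proportion of the points
`y ∈ A` near `x` satisfy both `d(f y, f x) ≤ 2Mr` and `d(f y, f z) ≤ 2Mr`: doubling compares the
balls around `x` and `z`, and at a density point `x` of `A` the ball of radius `r` contains enough
points of `A` for one such `y` to exist. Hence `d(f x, f z) ≤ 4Mr`. Sorting the points of `A` by the
constant `M` and by the scale below which these estimates hold yields countably many sets on which
`f` is locally Lipschitz, and by Lindelöf countably many on which it is Lipschitz. These sets need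
not be Borel, but the Lipschitz inequality is a closed condition on pairs of points of the graph, so
each of them may be enlarged to the preimage of the closure of its graph under `x ↦ (x, f x)`.
-/

section

open scoped ENNReal NNReal Topology

section Lipschitz

variable {X E : Type*} [PseudoEMetricSpace X] [PseudoEMetricSpace E] {f : X → E} {S : Set X}

lemma exists_seq_lipschitzOnWith_of_locallyLipschitzOn [SecondCountableTopology X]
    (hf : LocallyLipschitzOn S f) :
    ∃ T : ℕ → Set X, S ⊆ ⋃ n, T n ∧ ∀ n, ∃ K, LipschitzOnWith K f (T n) := by
  have hnhds : ∀ x ∈ S, ∃ t ∈ 𝓝[S] x, ∃ K, LipschitzOnWith K f t := fun x hx ↦ by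
    obtain ⟨K, t, ht, hK⟩ := hf hx
    exact ⟨t, ht, K, hK⟩
  choose! T hT hLip using hnhds
  obtain ⟨c, hcS, hc, hcover⟩ := TopologicalSpace.countable_cover_nhdsWithin hT
  rcases c.eq_empty_or_nonempty with rfl | hne
  · exact ⟨fun _ ↦ ∅, by simpa using hcover, fun _ ↦ ⟨0, lipschitzOnWith_empty 0 f⟩⟩
  · obtain ⟨x, rfl⟩ := hc.exists_eq_range hne
    exact ⟨T ∘ x, by simpa using hcover, fun n ↦ hLip _ (hcS (mem_range_self n))⟩

lemma lipschitzOnWith_preimage_closure_graphOn {K : ℝ≥0} (hf : LipschitzOnWith K f S) :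
    LipschitzOnWith K f ((fun x ↦ (x, f x)) ⁻¹' closure (S.graphOn f)) := by
  set G := S.graphOn f
  set L := {p : (X × E) × (X × E) | edist p.1.2 p.2.2 ≤ K * edist p.1.1 p.2.1}
  have hL : IsClosed L :=
    isClosed_le (by fun_prop) ((ENNReal.continuous_const_mul ENNReal.coe_ne_top).comp (by fun_prop))
  have hGL : G ×ˢ G ⊆ L := by
    rintro ⟨_, _⟩ ⟨⟨x, hx, rfl⟩, ⟨z, hz, rfl⟩⟩
    exact hf hx hz
  have hclosure : closure G ×ˢ closure G ⊆ L := by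
    simpa only [closure_prod_eq] using closure_minimal hGL hL
  exact fun x hx z hz ↦ hclosure (mk_mem_prod hx hz)

lemma exists_measurableSet_superset_lipschitzOnWith [SecondCountableTopology X]
    [MeasurableSpace X] [OpensMeasurableSpace X] [MeasurableSpace E] [OpensMeasurableSpace E]
    {K : ℝ≥0} (hf : Measurable f) (hLip : LipschitzOnWith K f S) :
    ∃ T, S ⊆ T ∧ MeasurableSet T ∧ LipschitzOnWith K f T :=
  ⟨(fun x ↦ (x, f x)) ⁻¹' closure (S.graphOn f), fun _ hx ↦ subset_closure (mem_image_of_mem _ hx),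
    (measurable_id.prodMk hf) isClosed_closure.measurableSet,
    lipschitzOnWith_preimage_closure_graphOn hLip⟩

end Lipschitz

section ApproxLipschitz

variable {X E : Type*} [PseudoMetricSpace X] [PseudoEMetricSpace E]

/-- The points of `A` in the ball `B_r(x)` at which `f` is further than `M * r` from `f x`, i.e.
the sets whose measure enters the definition of `δ_x f`. -/
def steepSet (A : Set X) (f : X → E) (M : ℝ≥0∞) (x : X) (r : ℝ) : Set X :=
  {y | y ∈ A ∩ ball x r ∧ M * ENNReal.ofReal r < edist (f y) (f x)}

variable {A : Set X} {f : X → E} {x z : X}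

lemma steepSet_anti {M N : ℝ≥0∞} (hMN : M ≤ N) (r : ℝ) :
    steepSet A f N x r ⊆ steepSet A f M x r :=
  fun _ hy ↦ ⟨hy.1, lt_of_le_of_lt (by gcongr) hy.2⟩

lemma edist_le_of_not_subset_steepSet_union {M : ℝ≥0∞} {r : ℝ} (hxz : dist x z < r)
    (h : ¬ A ∩ closedBall x r ⊆ steepSet A f M x (2 * r) ∪ steepSet A f M z (2 * r)) :
    edist (f x) (f z) ≤ 4 * M * ENNReal.ofReal r := by
  obtain ⟨y, ⟨hyA, hyr⟩, hy⟩ := not_subset.1 h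
  have hyx : dist y x < 2 * r := by
    linarith [mem_closedBall.1 hyr, dist_nonneg (x := x) (y := z)]
  have hyz : dist y z < 2 * r := by linarith [mem_closedBall.1 hyr, dist_triangle y x z]
  simp only [steepSet, mem_union, mem_ofPred_eq, mem_inter_iff, mem_ball, hyA, hyx, hyz, true_and,
    not_or, not_lt] at hy
  calc edist (f x) (f z) ≤ edist (f y) (f x) + edist (f y) (f z) := edist_triangle_left _ _ _
    _ ≤ M * ENNReal.ofReal (2 * r) + M * ENNReal.ofReal (2 * r) := add_le_add hy.1 hy.2
    _ = 4 * M * ENNReal.ofReal r := by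
      rw [ENNReal.ofReal_mul zero_le_two, ENNReal.ofReal_ofNat]; ring

variable [MeasurableSpace X]

/-- Pointwise approximate Lipschitz continuity of `f` along `A`: for some finite `M`, the points
where `f` is further than `M * r` from `f x` have vanishing density at `x`. The measure of a ball
replaces the normalisation `r ^ k` of `delta`, so that the notion makes sense without a
dimension. -/
def IsApproxLipschitzAt (μ : Measure X) (A : Set X) (f : X → E) (x : X) : Prop :=
  ∃ M : ℝ≥0, Tendsto (fun r ↦ μ (steepSet A f M x r) / μ (closedBall x r)) (𝓝[>] 0) (𝓝 0)

/-- The points at which, at every scale below `R`, the set `A` fills more than half of the ball and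
the points where `f` is steeper than `M` fill at most a proportion `η` of it. -/
def uniformApproxLipschitzSet (μ : Measure X) (A : Set X) (f : X → E) (M η : ℝ≥0) (R : ℝ) : Set X :=
  {x | ∀ r ∈ Ioo 0 R, 2⁻¹ * μ (closedBall x r) < μ (A ∩ closedBall x r) ∧
    μ (steepSet A f M x r) ≤ η * μ (closedBall x r)}

variable {μ : Measure X}

lemma edist_le_of_mem_uniformApproxLipschitzSet {M η C : ℝ≥0} {R r : ℝ}
    (hη : 2 * η * C ≤ 2⁻¹) (hC : μ (closedBall x (3 * r)) ≤ C * μ (closedBall x r))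
    (hx : x ∈ uniformApproxLipschitzSet μ A f M η R)
    (hz : z ∈ uniformApproxLipschitzSet μ A f M η R) (hxz : dist x z < r) (hr : 2 * r < R) :
    edist (f x) (f z) ≤ 4 * M * ENNReal.ofReal r := by
  have hr₀ : 0 < r := dist_nonneg.trans_lt hxz
  refine edist_le_of_not_subset_steepSet_union (A := A) hxz fun hsub ↦ ?_
  refine (hx r ⟨hr₀, by linarith⟩).1.not_ge ?_
  have hsteep : ∀ w ∈ uniformApproxLipschitzSet μ A f M η R, dist w x ≤ r →
      μ (steepSet A f M w (2 * r)) ≤ η * (C * μ (closedBall x r)) := fun w hw hwx ↦ by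
    have hball : closedBall w (2 * r) ⊆ closedBall x (3 * r) :=
      closedBall_subset_closedBall' (by linarith)
    grw [(hw (2 * r) ⟨by linarith, hr⟩).2, hball, hC]
  calc μ (A ∩ closedBall x r)
      ≤ μ (steepSet A f M x (2 * r)) + μ (steepSet A f M z (2 * r)) :=
        (measure_mono hsub).trans (measure_union_le _ _)
    _ ≤ η * (C * μ (closedBall x r)) + η * (C * μ (closedBall x r)) :=
        add_le_add (hsteep x hx (by simpa using hr₀.le)) (hsteep z hz (dist_comm x z ▸ hxz.le))
    _ = 2 * η * C * μ (closedBall x r) := by ring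
    _ ≤ 2⁻¹ * μ (closedBall x r) := by
      gcongr
      rw [← ENNReal.coe_inv_two]
      exact_mod_cast hη

lemma locallyLipschitzOn_uniformApproxLipschitzSet {η C : ℝ≥0} {R : ℝ} (M : ℝ≥0)
    (hη : 2 * η * C ≤ 2⁻¹) (hR : 0 < R)
    (hC : ∀ᶠ r in 𝓝[>] 0, ∀ x, μ (closedBall x (3 * r)) ≤ C * μ (closedBall x r)) :
    LocallyLipschitzOn (uniformApproxLipschitzSet μ A f M η R) f := by
  obtain ⟨ρ, hρ, hCρ⟩ := mem_nhdsGT_iff_exists_Ioo_subset.1 hC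
  set σ := min ρ (R / 2)
  have hσ : 0 < σ := lt_min hρ (half_pos hR)
  intro p _
  refine ⟨4 * M, _, inter_mem_nhdsWithin _ (ball_mem_nhds p (half_pos hσ)), ?_⟩
  rintro x ⟨hx, hxp⟩ z ⟨hz, hzp⟩
  have hxz : dist x z < σ := by linarith [mem_ball.1 hxp, mem_ball.1 hzp, dist_triangle_right x z p]
  have hlim : Tendsto (fun r ↦ 4 * M * ENNReal.ofReal r) (𝓝[>] dist x z)
      (𝓝 (4 * M * ENNReal.ofReal (dist x z))) :=
    (ENNReal.Tendsto.const_mul (ENNReal.continuous_ofReal.tendsto _)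
      (.inr (by finiteness))).mono_left nhdsWithin_le_nhds
  rw [edist_dist x z, ENNReal.coe_mul, ENNReal.coe_ofNat]
  refine ge_of_tendsto hlim ?_
  filter_upwards [Ioo_mem_nhdsGT hxz] with r ⟨hxr, hrσ⟩
  have hr₀ : 0 < r := dist_nonneg.trans_lt hxr
  exact edist_le_of_mem_uniformApproxLipschitzSet hη
    (hCρ ⟨hr₀, hrσ.trans_le (min_le_left _ _)⟩ x) hx hz hxr
    (by linarith [min_le_right ρ (R / 2)])

lemma IsApproxLipschitzAt.exists_mem_uniformApproxLipschitzSet {η : ℝ≥0}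
    (hf : IsApproxLipschitzAt μ A f x) (hη : 0 < η)
    (hA : Tendsto (fun r ↦ μ (A ∩ closedBall x r) / μ (closedBall x r)) (𝓝[>] 0) (𝓝 1)) :
    ∃ n : ℕ, x ∈ uniformApproxLipschitzSet μ A f n η (1 / (n + 1)) := by
  obtain ⟨M, hM⟩ := hf
  have hdense := hA.eventually_const_lt ENNReal.one_half_lt_one
  have hsteep := hM.eventually_le_const (ENNReal.coe_pos.2 hη)
  obtain ⟨R, hR, hscale⟩ := mem_nhdsGT_iff_exists_Ioo_subset.1 (hdense.and hsteep)
  obtain ⟨n, hnM, hnR⟩ := ((eventually_ge_atTop ⌈M⌉₊).and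
    (tendsto_one_div_add_atTop_nhds_zero_nat.eventually_lt_const (mem_Ioi.1 hR))).exists
  refine ⟨n, fun r hr ↦ ?_⟩
  obtain ⟨hr_dense, hr_steep⟩ := hscale ⟨hr.1, hr.2.trans hnR⟩
  refine ⟨(ENNReal.lt_div_iff_mul_lt (.inr (by simp)) (.inr (by simp))).1 hr_dense, ?_⟩
  have hMn : (M : ℝ≥0∞) ≤ (n : ℝ≥0) := ENNReal.coe_le_coe.2 (Nat.ceil_le.1 hnM)
  exact (measure_mono (steepSet_anti hMn r)).trans
    ((ENNReal.div_le_iff_le_mul (.inr ENNReal.coe_ne_top)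
      (.inr (ENNReal.coe_pos.2 hη).ne')).1 hr_steep)

end ApproxLipschitz

section Doubling

variable {X E : Type*} [PseudoMetricSpace X] [SecondCountableTopology X] [MeasurableSpace X]
  [BorelSpace X] {μ : Measure X} [IsLocallyFiniteMeasure μ] [IsUnifLocDoublingMeasure μ]
  [PseudoEMetricSpace E] {A : Set X} {f : X → E}

theorem exists_seq_lipschitzOnWith_of_ae_isApproxLipschitzAt
    (hf : ∀ᵐ x ∂μ, x ∈ A → IsApproxLipschitzAt μ A f x) :
    ∃ S : ℕ → Set X, (∀ᵐ x ∂μ, x ∈ A → x ∈ ⋃ n, S n) ∧ ∀ n, ∃ K, LipschitzOnWith K f (S n) := by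
  set C : ℝ≥0 := IsUnifLocDoublingMeasure.scalingConstantOf μ 3
  have hC : 0 < C := one_pos.trans_le (IsUnifLocDoublingMeasure.one_le_scalingConstantOf μ 3)
  set η : ℝ≥0 := (4 * C)⁻¹
  have hη : 2 * η * C ≤ 2⁻¹ := by
    simp only [η]
    field_simp
    norm_num
  set G : ℕ → Set X := fun n ↦ uniformApproxLipschitzSet μ A f n η (1 / (n + 1))
  have hG : ∀ n, LocallyLipschitzOn (G n) f := fun n ↦
    locallyLipschitzOn_uniformApproxLipschitzSet n hη Nat.one_div_pos_of_nat
      (IsUnifLocDoublingMeasure.eventually_measure_le_scaling_constant_mul μ 3)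
  choose S hGS hS using fun n ↦ exists_seq_lipschitzOnWith_of_locallyLipschitzOn (hG n)
  refine ⟨fun n ↦ S n.unpair.1 n.unpair.2, ?_, fun n ↦ hS _ _⟩
  filter_upwards [hf, ae_imp_of_ae_restrict (IsUnifLocDoublingMeasure.ae_tendsto_measure_inter_div
    μ A 1)] with x hfx hdensity hxA
  obtain ⟨n, hn⟩ := (hfx hxA).exists_mem_uniformApproxLipschitzSet (η := η) (by positivity)
    (hdensity hxA (fun _ ↦ x) id tendsto_id (by
      filter_upwards [self_mem_nhdsWithin] with r hr
      exact mem_closedBall_self (by simpa using hr.le)))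
  rw [iUnion_unpair]
  exact mem_iUnion_of_mem n (hGS n hn)

theorem exists_seq_measurableSet_lipschitzOnWith_of_ae_isApproxLipschitzAt
    [MeasurableSpace E] [OpensMeasurableSpace E] (hA : MeasurableSet A) (hf : Measurable f)
    (hLip : ∀ᵐ x ∂μ, x ∈ A → IsApproxLipschitzAt μ A f x) :
    ∃ B : ℕ → Set X, (∀ n, MeasurableSet (B n)) ∧ (∀ n, B n ⊆ A) ∧
      μ (A \ ⋃ n, B n) = 0 ∧ ∀ n, ∃ K, LipschitzOnWith K f (B n) := by
  obtain ⟨S, hcover, hS⟩ := exists_seq_lipschitzOnWith_of_ae_isApproxLipschitzAt hLip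
  choose K hK using hS
  choose T hST hT hTK using fun n ↦ exists_measurableSet_superset_lipschitzOnWith hf (hK n)
  refine ⟨fun n ↦ A ∩ T n, fun n ↦ hA.inter (hT n), fun n ↦ inter_subset_left, ?_,
    fun n ↦ ⟨K n, (hTK n).mono inter_subset_right⟩⟩
  refine measure_mono_null ?_ (ae_iff.1 hcover)
  rintro x ⟨hxA, hx⟩ hxS
  obtain ⟨n, hn⟩ := mem_iUnion.1 (hxS hxA)
  exact hx (mem_iUnion_of_mem n ⟨hxA, hST n hn⟩)

end Doubling

section FiniteDimensional

variable {X E : Type*} [NormedAddCommGroup X] [NormedSpace ℝ X] [FiniteDimensional ℝ X]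
  [MeasureSpace X] [BorelSpace X] [(volume : Measure X).IsAddHaarMeasure] [PseudoMetricSpace E]
  {A : Set X} {f : X → E}

lemma isApproxLipschitzAt_of_delta_lt_top {x : X}
    (hx : delta (Module.finrank ℝ X) A f x < ∞) : IsApproxLipschitzAt volume A f x := by
  obtain ⟨M, hM, hM_top⟩ := sInf_lt_iff.1 hx
  lift M to ℝ≥0 using hM_top.ne
  have hlim : Tendsto (fun r ↦ volume (steepSet A f M x r) /
      ENNReal.ofReal (r ^ Module.finrank ℝ X) / volume (ball (0 : X) 1)) (𝓝[>] 0) (𝓝 0) := by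
    rw [← ENNReal.zero_div]
    exact ENNReal.Tendsto.div_const hM (.inr (measure_ball_pos volume (0 : X) one_pos).ne')
  refine ⟨M, hlim.congr' ?_⟩
  filter_upwards [self_mem_nhdsWithin] with r hr
  have hr_pow : ENNReal.ofReal (r ^ Module.finrank ℝ X) ≠ 0 :=
    (ENNReal.ofReal_pos.2 (pow_pos hr _)).ne'
  rw [Measure.addHaar_closedBall _ _ (le_of_lt hr), div_eq_mul_inv, div_eq_mul_inv, div_eq_mul_inv,
    mul_assoc, ENNReal.mul_inv (.inl hr_pow) (.inl ENNReal.ofReal_ne_top)]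

theorem lusin_lipschitz_approximation_general [MeasurableSpace E] [OpensMeasurableSpace E]
    (hA : MeasurableSet A) (hf : Measurable f)
    (hδ : ∀ᵐ x ∂volume, x ∈ A → delta (Module.finrank ℝ X) A f x < ∞) :
    ∃ B : ℕ → Set X, (∀ n, MeasurableSet (B n)) ∧ (∀ n, B n ⊆ A) ∧
      volume (A \ ⋃ n, B n) = 0 ∧ ∀ n, ∃ K : ℝ≥0, LipschitzOnWith K f (B n) :=
  exists_seq_measurableSet_lipschitzOnWith_of_ae_isApproxLipschitzAt hA hf <|
    hδ.mono fun _ hx hxA ↦ isApproxLipschitzAt_of_delta_lt_top (hx hxA)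

end FiniteDimensional

end

/-- Theorem on Lusin-type Lipschitz approximation, part (ii):
if `δ_x f < ∞` for a.e. `x ∈ A`, then `A` can be covered, up to a Lebesgue negligible set,
by countably many Borel sets on which `f` is Lipschitz. -/
theorem lusin_lipschitz_approximation {E : Type*} [MetricSpace E] [CompactSpace E]
    [MeasurableSpace E] [BorelSpace E]
    (k : ℕ) (A : Set (EuclideanSpace ℝ (Fin k))) (hA : MeasurableSet A)
    (f : EuclideanSpace ℝ (Fin k) → E) (hf : Measurable f)
    (hδ : ∀ᵐ x ∂volume, x ∈ A → delta k A f x < ⊤) :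
    ∃ B : ℕ → Set (EuclideanSpace ℝ (Fin k)),
      (∀ n, MeasurableSet (B n)) ∧ (∀ n, B n ⊆ A) ∧
      volume (A \ ⋃ n, B n) = 0 ∧
      ∀ n, ∃ K : NNReal, LipschitzOnWith K f (B n) :=
  lusin_lipschitz_approximation_general hA hf (by simpa using hδ)
end
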